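/- (Hybrid size control.) Assume the nonatomicity assumption. Fix an integer k ∈ {1,…,L} and a real number k̄ with 0 < k̄ < k. Define G_k(t) = ∑_{ℓ=1}^k μ({x : p_(ℓ)(x) ≥ t}) for t ∈ ℝ, let G_k^{-1} be its generalized inverse, let Top(·, k) be any top-k classifier with respect to p, and define Γ*_{k̄,k}(x) = {ℓ ∈ Fin L : p_ℓ(x) ≥ G_k^{-1}(k̄)} ∩ Top(x, k). Then Γ*_{k̄,k} is feasible, i.e. |Γ*_{k̄,k}(x)| ≤ k for every x and size(Γ*_{k̄,k}) ≤ k̄, and it is optimal: every set-valued classifier Γ satisfying size(Γ) ≤ k̄ and |Γ(x)| ≤ k for μ-almost every x has error(Γ*_{k̄,k}) ≤ error(Γ). -/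

import Mathlib

open MeasureTheory Finset

/-- `sortedDesc q j` is the (j+1)-th largest value among `q 0, …, q (L-1)`. -/
noncomputable def sortedDesc {L : ℕ} (q : Fin L → ℝ) : Fin L → ℝ :=
  fun j => q (Tuple.sort q j.rev)

/-!
In a top-`k` set at `x`, as many labels score at least `t` as among the `k` largest scores, so
`G_k t` is the mean size of the hybrid rule with threshold `t`. Without atoms at `θ = G_k⁻¹(k̄)`,
`G_k` is continuous there, and the hybrid rule has mean size exactly `k̄`. Pointwise, it maximizes
`∑ ℓ ∈ S, (p x ℓ - θ)` over all `S` with at most `k` labels: replace each summand by its positive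
part, whose sum a top-`k` set maximizes. Integrating, the hybrid rule minimizes the Lagrangian
`error + θ * size`; as `θ ≥ 0` and the size constraint is saturated, it minimizes the error.
-/

open Filter Topology

section GeneralizedInverse

variable {α β : Type*}

/-- The generalized inverse `F⁻¹(u) = inf {t | F t ≤ u}` of a nonincreasing function `F`.
The infimum is a junk value when the set is empty or unbounded below. -/
def generalizedInverse [InfSet α] [LE β] (F : α → β) (u : β) : α :=
  sInf {t | F t ≤ u}

theorem apply_generalizedInverse_of_continuousAt [ConditionallyCompleteLinearOrder α]
    [TopologicalSpace α] [OrderTopology α] [DenselyOrdered α] [NoMinOrder α]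
    [LinearOrder β] [TopologicalSpace β] [OrderClosedTopology β] {F : α → β} {u : β}
    (hF : ContinuousAt F (generalizedInverse F u)) (hne : {t | F t ≤ u}.Nonempty)
    (hbdd : BddBelow {t | F t ≤ u}) : F (generalizedInverse F u) = u := by
  apply le_antisymm
  · exact hF.continuousWithinAt.closure_le (csInf_mem_closure hne hbdd)
      continuousWithinAt_const fun _ ht => ht
  · have hleft : Tendsto F (𝓝[<] generalizedInverse F u) (𝓝 (F (generalizedInverse F u))) :=
      hF.continuousWithinAt
    refine ge_of_tendsto hleft ?_
    filter_upwards [self_mem_nhdsWithin] with t ht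
    exact (not_le.mp (notMem_of_lt_csInf (s := {t | F t ≤ u}) ht hbdd)).le

end GeneralizedInverse

section TailMeasure

variable {α : Type*} [LinearOrder α] [TopologicalSpace α] [OrderTopology α] [MeasurableSpace α]
  [OpensMeasurableSpace α] (ν : Measure α) [IsFiniteMeasure ν]

theorem continuousAt_measureReal_Ici [FirstCountableTopology α] {t : α} (ht : ν {t} = 0) :
    ContinuousAt (fun s => ν.real (Set.Ici s)) t := by
  refine (ENNReal.tendsto_toReal (measure_ne_top ν _)).comp
    (tendsto_measure_of_ae_tendsto_indicator_of_isFiniteMeasure (𝓝 t) measurableSet_Ici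
      (fun _ => measurableSet_Ici) ?_)
  filter_upwards [compl_mem_ae_iff.mpr ht] with y hy
  rcases lt_or_gt_of_ne hy with hyt | hty
  · filter_upwards [lt_mem_nhds hyt] with s hys
    exact iff_of_false hys.not_ge hyt.not_ge
  · filter_upwards [gt_mem_nhds hty] with s hsy
    exact iff_of_true hsy.le hty.le

theorem tendsto_measureReal_Ici_atTop [NoMaxOrder α] [(atTop : Filter α).IsCountablyGenerated] :
    Tendsto (fun s => ν.real (Set.Ici s)) atTop (𝓝 0) := by
  have hlim := tendsto_measure_of_tendsto_indicator_of_isFiniteMeasure (A := ∅) atTop ν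
    (fun s : α => measurableSet_Ici (a := s)) fun y =>
      (eventually_gt_atTop y).mono fun s hys => iff_of_false hys.not_ge (Set.notMem_empty y)
  rw [← measureReal_empty (μ := ν)]
  exact (ENNReal.tendsto_toReal (measure_ne_top ν ∅)).comp hlim

end TailMeasure

section TopSet

variable {ι α : Type*}

/-- `T` is a top set for the scores `q`: every label of `T` scores at least as high as every label
outside `T`. A top-`k` classifier selects a top set of cardinality `k` at each point. -/
def IsTopSet [LE α] (q : ι → α) (T : Finset ι) : Prop :=
  ∀ i ∈ T, ∀ j, j ∉ T → q j ≤ q i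

/-- The hybrid rule `Γ*`: the labels of `T` whose score is at least `t`. -/
noncomputable def hybridSet (q : ι → ℝ) (t : ℝ) (T : Finset ι) : Finset ι :=
  T.filter (t ≤ q ·)

theorem card_hybridSet_le (q : ι → ℝ) (t : ℝ) (T : Finset ι) : #(hybridSet q t T) ≤ #T :=
  card_filter_le _ _

theorem IsTopSet.comp_monotone {β : Type*} [Preorder α] [Preorder β] {q : ι → α} {T : Finset ι}
    (hT : IsTopSet q T) {g : α → β} (hg : Monotone g) : IsTopSet (g ∘ q) T :=
  fun i hi j hj => hg (hT i hi j hj)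

theorem IsTopSet.sum_le_sum_of_card_le [AddCommGroup α] [LinearOrder α] [IsOrderedAddMonoid α]
    {f : ι → α} {S T : Finset ι} (hT : IsTopSet f T) (hf : ∀ i, 0 ≤ f i) (hST : #S ≤ #T) :
    ∑ i ∈ S, f i ≤ ∑ i ∈ T, f i := by
  classical
  rw [← card_sdiff_le_card_sdiff_iff] at hST
  rw [← sum_sdiff_le_sum_sdiff]
  rcases (T \ S).eq_empty_or_nonempty with hempty | hne
  · have hS : S \ T = ∅ := by simpa [hempty] using hST
    rw [hS, hempty]
  · obtain ⟨a, ha, hmin⟩ := exists_min_image (T \ S) f hne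
    calc
      ∑ i ∈ S \ T, f i ≤ #(S \ T) • f a :=
        sum_le_card_nsmul _ _ _ fun i hi =>
          hT a (mem_sdiff.mp ha).1 i (mem_sdiff.mp hi).2
      _ ≤ #(T \ S) • f a := nsmul_le_nsmul_left (hf a) hST
      _ ≤ ∑ i ∈ T \ S, f i := card_nsmul_le_sum _ _ _ hmin

theorem IsTopSet.sum_sub_le_sum_hybridSet {q : ι → ℝ} {S T : Finset ι} (hT : IsTopSet q T)
    (hST : #S ≤ #T) (θ : ℝ) :
    ∑ i ∈ S, (q i - θ) ≤ ∑ i ∈ hybridSet q θ T, (q i - θ) := by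
  have hmono : Monotone fun y : ℝ => max (y - θ) 0 := fun _ _ h =>
    max_le_max_right 0 (sub_le_sub_right h θ)
  calc
    ∑ i ∈ S, (q i - θ) ≤ ∑ i ∈ S, max (q i - θ) 0 := sum_le_sum fun _ _ => le_max_left _ _
    _ ≤ ∑ i ∈ T, max (q i - θ) 0 :=
      (hT.comp_monotone hmono).sum_le_sum_of_card_le (fun _ => le_max_right _ _) hST
    _ = ∑ i ∈ hybridSet q θ T, (q i - θ) := by
      rw [hybridSet, sum_filter]
      refine sum_congr rfl fun i _ => ?_
      split_ifs with h
      · exact max_eq_left (sub_nonneg.mpr h)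
      · exact max_eq_right (sub_nonpos.mpr (not_le.mp h).le)

theorem IsTopSet.card_hybridSet [Fintype ι] {q : ι → ℝ} {T : Finset ι} (hT : IsTopSet q T)
    (t : ℝ) : #(hybridSet q t T) = min #T #{i | t ≤ q i} := by
  by_cases hall : ∀ i ∈ T, t ≤ q i
  · have hsub : T ⊆ univ.filter (t ≤ q ·) := fun i hi => (mem_filter_univ i).mpr (hall i hi)
    rw [hybridSet, filter_true_of_mem hall, min_eq_left (card_le_card hsub)]
  · push Not at hall
    obtain ⟨i, hi, hit⟩ := hall
    have hmem : ∀ j, t ≤ q j → j ∈ T := fun j hj => by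
      by_contra hjT
      exact (hj.trans (hT i hi j hjT)).not_gt hit
    have heq : hybridSet q t T = ({i | t ≤ q i} : Finset ι) := by
      ext j
      simpa only [hybridSet, mem_filter, mem_univ, true_and, and_iff_right_iff_imp] using hmem j
    rw [heq, min_eq_right (heq ▸ card_hybridSet_le q t T)]

end TopSet

section SortedDesc

variable {L : ℕ}

theorem sortedDesc_antitone (q : Fin L → ℝ) : Antitone (sortedDesc q) :=
  fun _ _ hij => Tuple.monotone_sort q (Fin.rev_le_rev.mpr hij)

theorem card_filter_le_sortedDesc (q : Fin L → ℝ) (t : ℝ) :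
    #{j | t ≤ sortedDesc q j} = #{i | t ≤ q i} :=
  card_equiv (Fin.revPerm.trans (Tuple.sort q)) fun j => by
    simp only [mem_filter, mem_univ, true_and]
    rfl

theorem le_sortedDesc_iff (q : Fin L → ℝ) (t : ℝ) (j : Fin L) :
    t ≤ sortedDesc q j ↔ (j : ℕ) < #{i | t ≤ q i} := by
  rw [← card_filter_le_sortedDesc q t]
  exact (Tuple.lt_card_ge_iff_apply_ge_of_antitone (sortedDesc_antitone q)).symm

theorem card_filter_lt_and_le_sortedDesc (q : Fin L → ℝ) (t : ℝ) (k : ℕ) :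
    #{j : Fin L | (j : ℕ) < k ∧ t ≤ sortedDesc q j} = min k #{i | t ≤ q i} := by
  have hcard : #{i | t ≤ q i} ≤ L := by simpa using card_le_univ ({i | t ≤ q i} : Finset (Fin L))
  simp only [le_sortedDesc_iff, ← lt_min_iff, Fin.card_filter_val_lt]
  exact min_eq_right (min_le_of_right_le hcard)

theorem measurable_sortedDesc : Measurable (sortedDesc : (Fin L → ℝ) → Fin L → ℝ) := by
  refine measurable_pi_lambda _ fun j => measurable_of_Ici fun t => ?_
  have hcount : Measurable fun q : Fin L → ℝ => #{i | t ≤ q i} := by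
    simp only [card_filter]
    exact Finset.measurable_sum _ fun i _ => Measurable.ite
      (measurableSet_le measurable_const (measurable_pi_apply i)) measurable_const measurable_const
  simpa only [Set.preimage, Set.mem_Ici, le_sortedDesc_iff] using
    measurableSet_lt measurable_const hcount

end SortedDesc

section Classifier

variable {𝒳 ι : Type*} [MeasurableSpace 𝒳] {μ : Measure 𝒳}

/-- The average size of the set-valued classifier `Γ`. -/
noncomputable def meanSize (μ : Measure 𝒳) (Γ : 𝒳 → Finset ι) : ℝ :=
  ∫ x, (#(Γ x) : ℝ) ∂μ

/-- The error rate of the set-valued classifier `Γ`. It is `P(Y ∉ Γ(X))` when `μ` is the law of `X`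
and `p x` is the conditional law of `Y`, but the formula makes sense for arbitrary scores `p`. -/
noncomputable def errorRate (μ : Measure 𝒳) (p : 𝒳 → ι → ℝ) (Γ : 𝒳 → Finset ι) : ℝ :=
  ∫ x, (1 - ∑ i ∈ Γ x, p x i) ∂μ

theorem nullMeasurableSet_mem_of_measurable_top {Γ : 𝒳 → Finset ι} (hΓ : Measurable[_, ⊤] Γ)
    (i : ι) : NullMeasurableSet {x | i ∈ Γ x} μ :=
  (hΓ (t := {S | i ∈ S}) trivial).nullMeasurableSet

theorem integrable_of_nonneg_of_sum_eq_one [Fintype ι] [IsFiniteMeasure μ] {p : 𝒳 → ι → ℝ}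
    (hp : ∀ i, AEMeasurable (p · i) μ) (hp0 : ∀ x i, 0 ≤ p x i) (hpsum : ∀ x, ∑ i, p x i = 1)
    (i : ι) : Integrable (p · i) μ := by
  have hp1 : ∀ x, p x i ≤ 1 := fun x =>
    hpsum x ▸ single_le_sum (fun j _ => hp0 x j) (mem_univ i)
  exact .of_mem_Icc 0 1 (hp i) (.of_forall fun x => ⟨hp0 x i, hp1 x⟩)

theorem integrable_sum_mem [Finite ι] {E : Type*} [NormedAddCommGroup E] {Γ : 𝒳 → Finset ι}
    (hΓ : ∀ i, NullMeasurableSet {x | i ∈ Γ x} μ) {f : 𝒳 → ι → E}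
    (hf : ∀ i, Integrable (f · i) μ) : Integrable (fun x => ∑ i ∈ Γ x, f x i) μ := by
  classical
  have := Fintype.ofFinite ι
  have hsum : (fun x => ∑ i ∈ Γ x, f x i) =
      fun x => ∑ i, {x | i ∈ Γ x}.indicator (f · i) x := by
    funext x
    simp [Set.indicator_apply]
  rw [hsum]
  exact integrable_finsetSum _ fun i _ => (hf i).indicator₀ (hΓ i)

theorem integrable_card [Finite ι] [IsFiniteMeasure μ] {Γ : 𝒳 → Finset ι}
    (hΓ : ∀ i, NullMeasurableSet {x | i ∈ Γ x} μ) : Integrable (fun x => (#(Γ x) : ℝ)) μ := by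
  simpa using integrable_sum_mem hΓ fun _ => integrable_const (1 : ℝ)

theorem meanSize_eq_sum_measureReal [Fintype ι] [IsFiniteMeasure μ] {Γ : 𝒳 → Finset ι}
    (hΓ : ∀ i, NullMeasurableSet {x | i ∈ Γ x} μ) :
    meanSize μ Γ = ∑ i, μ.real {x | i ∈ Γ x} := by
  classical
  have hcard : (fun x => (#(Γ x) : ℝ)) = fun x => ∑ i, {x | i ∈ Γ x}.indicator (1 : 𝒳 → ℝ) x := by
    funext x
    simp [Set.indicator_apply]
  rw [meanSize, hcard, integral_finsetSum _ fun i _ => (integrable_const 1).indicator₀ (hΓ i)]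
  exact sum_congr rfl fun i _ => by simp [integral_indicator₀ (hΓ i)]

theorem errorRate_add_mul_meanSize [Finite ι] [IsFiniteMeasure μ] {p : 𝒳 → ι → ℝ}
    (hp : ∀ i, Integrable (p · i) μ) {Γ : 𝒳 → Finset ι}
    (hΓ : ∀ i, NullMeasurableSet {x | i ∈ Γ x} μ) (θ : ℝ) :
    errorRate μ p Γ + θ * meanSize μ Γ = ∫ x, (1 - ∑ i ∈ Γ x, (p x i - θ)) ∂μ := by
  have herror : Integrable (fun x => 1 - ∑ i ∈ Γ x, p x i) μ :=
    (integrable_const 1).sub (integrable_sum_mem hΓ hp)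
  rw [errorRate, meanSize, ← integral_const_mul,
    ← integral_add herror ((integrable_card hΓ).const_mul θ)]
  refine integral_congr_ae (.of_forall fun x => ?_)
  simp only [sum_sub_distrib, sum_const, nsmul_eq_mul]
  ring

theorem nullMeasurableSet_mem_hybridSet {p : 𝒳 → ι → ℝ} (hp : ∀ i, AEMeasurable (p · i) μ)
    {T : 𝒳 → Finset ι} (hT : ∀ i, NullMeasurableSet {x | i ∈ T x} μ) (t : ℝ) (i : ι) :
    NullMeasurableSet {x | i ∈ hybridSet (p x) t (T x)} μ := by
  simpa only [hybridSet, mem_filter, Set.ofPred_and] using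
    (hT i).inter (nullMeasurableSet_le aemeasurable_const (hp i))

/-- Weak duality: `θ` is the Lagrange multiplier of the constraint on the average size. -/
theorem errorRate_hybridSet_le [Finite ι] [IsFiniteMeasure μ] {p : 𝒳 → ι → ℝ}
    (hp : ∀ i, Integrable (p · i) μ) {T : 𝒳 → Finset ι}
    (hT : ∀ i, NullMeasurableSet {x | i ∈ T x} μ) (hTop : ∀ᵐ x ∂μ, IsTopSet (p x) (T x))
    {θ : ℝ} (hθ : 0 ≤ θ) {Γ : 𝒳 → Finset ι} (hΓ : ∀ i, NullMeasurableSet {x | i ∈ Γ x} μ)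
    (hcard : ∀ᵐ x ∂μ, #(Γ x) ≤ #(T x))
    (hsize : meanSize μ Γ ≤ meanSize μ fun x => hybridSet (p x) θ (T x)) :
    errorRate μ p (fun x => hybridSet (p x) θ (T x)) ≤ errorRate μ p Γ := by
  have hhybrid := nullMeasurableSet_mem_hybridSet (fun i => (hp i).aemeasurable) hT θ
  have hint : ∀ {Δ : 𝒳 → Finset ι}, (∀ i, NullMeasurableSet {x | i ∈ Δ x} μ) →
      Integrable (fun x => 1 - ∑ i ∈ Δ x, (p x i - θ)) μ := fun hΔ =>
    (integrable_const 1).sub (integrable_sum_mem hΔ fun i => (hp i).sub (integrable_const θ))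
  have hlagrangian : ∫ x, (1 - ∑ i ∈ hybridSet (p x) θ (T x), (p x i - θ)) ∂μ
      ≤ ∫ x, (1 - ∑ i ∈ Γ x, (p x i - θ)) ∂μ := by
    refine integral_mono_ae (hint hhybrid) (hint hΓ) ?_
    filter_upwards [hTop, hcard] with x hTx hΓx
    exact sub_le_sub_left (hTx.sum_sub_le_sum_hybridSet hΓx θ) 1
  rw [← errorRate_add_mul_meanSize hp hhybrid, ← errorRate_add_mul_meanSize hp hΓ] at hlagrangian
  linarith [mul_le_mul_of_nonneg_left hsize hθ]

end Classifier

section MeanTopCount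

variable {𝒳 : Type*} [MeasurableSpace 𝒳] {μ : Measure 𝒳} {L : ℕ} {p : 𝒳 → Fin L → ℝ} {k : ℕ}

/-- The function `G_k`: the average number of scores that are at least `t` among the `k` largest
ones. The `k` largest ranks are the indices `0, …, k - 1` of `sortedDesc`. -/
noncomputable def meanTopCount (μ : Measure 𝒳) (p : 𝒳 → Fin L → ℝ) (k : ℕ) (t : ℝ) : ℝ :=
  ∑ j ∈ univ.filter (fun j : Fin L => (j : ℕ) < k), μ.real {x | t ≤ sortedDesc (p x) j}

theorem aemeasurable_sortedDesc (hp : ∀ i, AEMeasurable (p · i) μ) (j : Fin L) :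
    AEMeasurable (fun x => sortedDesc (p x) j) μ :=
  ((measurable_pi_apply j).comp measurable_sortedDesc).comp_aemeasurable
    (aemeasurable_pi_iff.mpr hp)

theorem measureReal_le_sortedDesc_eq_map (hp : ∀ i, AEMeasurable (p · i) μ) (j : Fin L) (t : ℝ) :
    μ.real {x | t ≤ sortedDesc (p x) j} =
      (μ.map fun x => sortedDesc (p x) j).real (Set.Ici t) :=
  (map_measureReal_apply_of_aemeasurable (aemeasurable_sortedDesc hp j) measurableSet_Ici).symm

theorem meanSize_hybridSet [IsFiniteMeasure μ] (hp : ∀ i, AEMeasurable (p · i) μ)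
    {T : 𝒳 → Finset (Fin L)} (hTop : ∀ x, IsTopSet (p x) (T x)) (hcard : ∀ x, #(T x) = k)
    (t : ℝ) : meanSize μ (fun x => hybridSet (p x) t (T x)) = meanTopCount μ p k t := by
  let ranks (x : 𝒳) : Finset (Fin L) := {j | (j : ℕ) < k ∧ t ≤ sortedDesc (p x) j}
  have hranks : ∀ j, NullMeasurableSet {x | j ∈ ranks x} μ := fun j => by
    simpa only [ranks, mem_filter, mem_univ, true_and, Set.ofPred_and] using
      (NullMeasurableSet.const ((j : ℕ) < k)).inter
        (nullMeasurableSet_le aemeasurable_const (aemeasurable_sortedDesc hp j))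
  calc
    meanSize μ (fun x => hybridSet (p x) t (T x)) = meanSize μ ranks := by
      simp only [meanSize, ranks, (hTop _).card_hybridSet, hcard, card_filter_lt_and_le_sortedDesc]
    _ = ∑ j, μ.real {x | j ∈ ranks x} := meanSize_eq_sum_measureReal hranks
    _ = meanTopCount μ p k t := by
      rw [meanTopCount, sum_filter]
      refine sum_congr rfl fun j _ => ?_
      split_ifs with hj <;> simp [ranks, hj]

theorem continuousAt_meanTopCount [IsFiniteMeasure μ] (hp : ∀ i, AEMeasurable (p · i) μ) {t : ℝ}
    (hatom : ∀ i, μ {x | p x i = t} = 0) : ContinuousAt (meanTopCount μ p k) t := by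
  refine tendsto_finsetSum _ fun j _ => ?_
  simp only [measureReal_le_sortedDesc_eq_map hp]
  refine continuousAt_measureReal_Ici _ ?_
  rw [Measure.map_apply_of_aemeasurable (aemeasurable_sortedDesc hp j) (measurableSet_singleton t)]
  refine measure_mono_null (fun x hx => ?_) (measure_iUnion_null hatom)
  exact Set.mem_iUnion.mpr ⟨_, hx⟩

theorem tendsto_meanTopCount_atTop [IsFiniteMeasure μ] (hp : ∀ i, AEMeasurable (p · i) μ) :
    Tendsto (meanTopCount μ p k) atTop (𝓝 0) := by
  rw [← sum_const_zero (s := univ.filter (fun j : Fin L => (j : ℕ) < k))]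
  refine tendsto_finsetSum _ fun j _ => ?_
  simp only [measureReal_le_sortedDesc_eq_map hp]
  exact tendsto_measureReal_Ici_atTop _

theorem meanTopCount_of_forall_le (hkL : k ≤ L) {t : ℝ} (ht : ∀ x i, t ≤ p x i) :
    meanTopCount μ p k t = k * μ.real Set.univ := by
  have huniv : ∀ j, {x | t ≤ sortedDesc (p x) j} = Set.univ := fun j =>
    Set.eq_univ_of_forall fun x => ht x _
  simp only [meanTopCount, huniv, sum_const, Fin.card_filter_val_lt, min_eq_right hkL,
    nsmul_eq_mul]

theorem zero_mem_lowerBounds_meanTopCount_le (hp0 : ∀ x i, 0 ≤ p x i) (hkL : k ≤ L) {u : ℝ}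
    (hu : u < k * μ.real Set.univ) : 0 ∈ lowerBounds {t | meanTopCount μ p k t ≤ u} := by
  intro t (ht : meanTopCount μ p k t ≤ u)
  by_contra! hneg
  rw [meanTopCount_of_forall_le hkL fun x i => hneg.le.trans (hp0 x i)] at ht
  exact hu.not_ge ht

theorem nonempty_meanTopCount_le [IsFiniteMeasure μ] (hp : ∀ i, AEMeasurable (p · i) μ) {u : ℝ}
    (hu : 0 < u) : {t | meanTopCount μ p k t ≤ u}.Nonempty :=
  ((tendsto_meanTopCount_atTop hp).eventually_le_const hu).exists

end MeanTopCount

theorem hybrid_size_control_oracle_general {𝒳 : Type*} [MeasurableSpace 𝒳] {μ : Measure 𝒳}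
    [IsFiniteMeasure μ] {L : ℕ} {p : 𝒳 → Fin L → ℝ} (hp : ∀ ℓ, Integrable (p · ℓ) μ)
    (hp0 : ∀ x ℓ, 0 ≤ p x ℓ) {k : ℕ} (hkL : k ≤ L) {kbar : ℝ} (hkbar0 : 0 < kbar)
    (hkbark : kbar < k * μ.real Set.univ) {θ : ℝ}
    (hθ : θ = generalizedInverse (meanTopCount μ p k) kbar)
    (hatom : ∀ ℓ, μ {x | p x ℓ = θ} = 0) {Top : 𝒳 → Finset (Fin L)}
    (hTopMeas : ∀ ℓ, NullMeasurableSet {x | ℓ ∈ Top x} μ) (hTopCard : ∀ x, #(Top x) = k)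
    (hTop : ∀ x, IsTopSet (p x) (Top x)) :
    (∀ x, #(hybridSet (p x) θ (Top x)) ≤ k) ∧
    meanSize μ (fun x => hybridSet (p x) θ (Top x)) = kbar ∧
    ∀ Γ : 𝒳 → Finset (Fin L), (∀ ℓ, NullMeasurableSet {x | ℓ ∈ Γ x} μ) →
      meanSize μ Γ ≤ kbar → (∀ᵐ x ∂μ, #(Γ x) ≤ k) →
      errorRate μ p (fun x => hybridSet (p x) θ (Top x)) ≤ errorRate μ p Γ := by
  have hpm : ∀ ℓ, AEMeasurable (p · ℓ) μ := fun ℓ => (hp ℓ).aemeasurable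
  have hne := nonempty_meanTopCount_le (k := k) hpm hkbar0
  have hlower := zero_mem_lowerBounds_meanTopCount_le hp0 hkL hkbark
  have hsize : meanSize μ (fun x => hybridSet (p x) θ (Top x)) = kbar := by
    subst hθ
    rw [meanSize_hybridSet hpm hTop hTopCard]
    exact apply_generalizedInverse_of_continuousAt (continuousAt_meanTopCount hpm hatom) hne
      ⟨0, hlower⟩
  have hθ0 : 0 ≤ θ := hθ ▸ le_csInf hne hlower
  refine ⟨fun x => (card_hybridSet_le _ _ _).trans_eq (hTopCard x), hsize, ?_⟩
  intro Γ hΓ hΓsize hΓcard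
  exact errorRate_hybridSet_le hp hTopMeas (.of_forall hTop) hθ0 hΓ
    (hΓcard.mono fun x hx => hx.trans_eq (hTopCard x).symm) (hΓsize.trans_eq hsize.symm)

/-- hybrid size control: the intersection of the thresholding
classifier at level G_k⁻¹(k̄) with a top-k classifier is feasible (point-wise
size at most k, average size at most k̄) and minimizes the error rate among
all classifiers satisfying these two constraints. -/
theorem hybrid_size_control_oracle
    {𝒳 : Type*} [m𝒳 : MeasurableSpace 𝒳] (μ : Measure 𝒳) [IsProbabilityMeasure μ]
    (L : ℕ) (hL : 1 ≤ L)
    (p : 𝒳 → Fin L → ℝ) (hp : Measurable p)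
    (hp0 : ∀ x ℓ, 0 ≤ p x ℓ) (hpsum : ∀ x, ∑ ℓ, p x ℓ = 1)
    (hatom : ∀ (ℓ : Fin L) (t : ℝ), μ {x | p x ℓ = t} = 0)
    (k : ℕ) (hk1 : 1 ≤ k) (hkL : k ≤ L)
    (kbar : ℝ) (hkbar0 : 0 < kbar) (hkbark : kbar < k)
    (Gk : ℝ → ℝ)
    (hGk : Gk = fun t =>
      ∑ j ∈ Finset.univ.filter (fun j : Fin L => (j : ℕ) < k),
        (μ {x | t ≤ sortedDesc (p x) j}).toReal)
    (θ : ℝ) (hθ : θ = sInf {t : ℝ | Gk t ≤ kbar})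
    (Top : 𝒳 → Finset (Fin L))
    (hTopMeas : @Measurable 𝒳 (Finset (Fin L)) m𝒳 ⊤ Top)
    (hTopCard : ∀ x, (Top x).card = k)
    (hTopTop : ∀ x, ∀ ℓ ∈ Top x, ∀ m, m ∉ Top x → p x m ≤ p x ℓ)
    (Γstar : 𝒳 → Finset (Fin L))
    (hΓstar : ∀ x, Γstar x = (Finset.univ.filter (fun ℓ => θ ≤ p x ℓ)) ∩ Top x) :
    (∀ x, (Γstar x).card ≤ k) ∧
    (∫ x, ((Γstar x).card : ℝ) ∂μ) ≤ kbar ∧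
    ∀ Γ : 𝒳 → Finset (Fin L), @Measurable 𝒳 (Finset (Fin L)) m𝒳 ⊤ Γ →
      (∫ x, ((Γ x).card : ℝ) ∂μ) ≤ kbar →
      (∀ᵐ x ∂μ, (Γ x).card ≤ k) →
      (∫ x, (1 - ∑ ℓ ∈ Γstar x, p x ℓ) ∂μ) ≤ ∫ x, (1 - ∑ ℓ ∈ Γ x, p x ℓ) ∂μ := by
  have hpint := integrable_of_nonneg_of_sum_eq_one (μ := μ)
    (fun ℓ => (measurable_pi_iff.mp hp ℓ).aemeasurable) hp0 hpsum
  have hθ_eq : θ = generalizedInverse (meanTopCount μ p k) kbar := hθ.trans (hGk ▸ rfl)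
  obtain rfl : Γstar = fun x => hybridSet (p x) θ (Top x) := by
    funext x
    rw [hΓstar, filter_inter, univ_inter, hybridSet]
  obtain ⟨hcard, hsize, hopt⟩ := hybrid_size_control_oracle_general hpint hp0 hkL hkbar0
    (by simpa using hkbark) hθ_eq (fun ℓ => hatom ℓ θ)
    (nullMeasurableSet_mem_of_measurable_top hTopMeas) hTopCard hTopTop
  exact ⟨hcard, hsize.le, fun Γ hΓ => hopt Γ (nullMeasurableSet_mem_of_measurable_top hΓ)⟩
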